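/- Let R be a Dedekind domain that is not a field such that Cl(R) is infinite and every class of Cl(R) contains infinitely many nonzero prime ideals of R. Then the system of sets of lengths of R is {L(a) | a ∈ R, a ≠ 0} = {{0}, {1}} ∪ {L ⊆ ℤ | L is a finite nonempty set with min L ≥ 2}. -/

import Mathlib

open scoped nonZeroDivisors

/-- The set of lengths `L(a)` of `a`: the set of all `k` such that `a` is a product of `k`
irreducible elements. -/
def setOfLengths {R : Type*} [CommMonoid R] (a : R) : Set ℕ :=
  {k | ∃ s : Multiset R, (∀ u ∈ s, Irreducible u) ∧ Multiset.card s = k ∧ s.prod = a}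

/-!
If an ideal `(a)` is a product of primes `P i`, then the factorizations of `a` correspond to the
partitions of the index set into minimal sets over which the classes of the `P i` have product `1`;
in other words, `L(a)` is the set of all `k` such that the indices have a `k`-coloring all of whose
color classes are such minimal sets.

Let `L = {l₁, …, lₙ}` with all `lⱼ ≥ 2`. Take the grid `Fin l₁ × ⋯ × Fin lₙ` as index set, and label
it by elements of the class group such that every slice `xⱼ = c` has product `1`, but no other
products are `1` without need. For the labels `t, t⁻¹, t, t⁻¹` around an axis-parallel rectangle,
all slice products are `1`, and the product over a set `S` is `1` for all `t` only if `S` contains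
an even number of the four vertices. Since the class group is infinite, Neumann's covering lemma
then yields a labeling for which every set with product `1` meets all rectangles evenly.

For such a labeling slices are minimal, so the `n` partitions into parallel slices give the lengths
`l₁, …, lₙ`. Conversely, if all color classes of a coloring meet all rectangles evenly, then the
coloring either depends on a single coordinate, and is one of these partitions, or has at most two
colors. Hence `L(a) = L` as soon as `2 ∈ L`. Multiplying `a` by a power of a prime element
shifts `L(a)`, which gives the remaining `L`.
-/

open Function

section SetOfLengths

section CommMonoid

variable {M : Type*} [CommMonoid M] {a b : M} {k : ℕ}

lemma mem_setOfLengths_iff_exists_fin :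
    k ∈ setOfLengths a ↔ ∃ u : Fin k → M, (∀ t, Irreducible (u t)) ∧ ∏ t, u t = a := by
  constructor
  · rintro ⟨s, hs, rfl, rfl⟩
    induction s using Quotient.inductionOn with
    | h l => exact ⟨l.get, fun t => hs _ (l.get_mem t), Fin.prod_univ_getElem l⟩
  · rintro ⟨u, hu, rfl⟩
    exact ⟨Finset.univ.val.map u, by simpa using hu, by simp, rfl⟩

lemma zero_mem_setOfLengths_iff : 0 ∈ setOfLengths a ↔ a = 1 := by
  simp [mem_setOfLengths_iff_exists_fin, eq_comm]

lemma add_one_mem_setOfLengths_iff :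
    k + 1 ∈ setOfLengths a ↔ ∃ u b, Irreducible u ∧ k ∈ setOfLengths b ∧ u * b = a := by
  constructor
  · rintro ⟨s, hs, hcard, rfl⟩
    obtain ⟨u, hu⟩ := Multiset.card_pos_iff_exists_mem.1 (by omega : 0 < s.card)
    obtain ⟨t, rfl⟩ := Multiset.exists_cons_of_mem hu
    rw [Multiset.forall_mem_cons] at hs
    exact ⟨u, t.prod, hs.1, ⟨t, hs.2, by simpa using hcard, rfl⟩, (Multiset.prod_cons u t).symm⟩
  · rintro ⟨u, b, hu, ⟨s, hs, rfl, rfl⟩, rfl⟩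
    exact ⟨u ::ₘ s, Multiset.forall_mem_cons.2 ⟨hu, hs⟩, s.card_cons u, s.prod_cons u⟩

lemma one_mem_setOfLengths_iff : 1 ∈ setOfLengths a ↔ Irreducible a := by
  simpa [zero_mem_setOfLengths_iff] using add_one_mem_setOfLengths_iff (a := a) (k := 0)

lemma not_isUnit_of_mem_setOfLengths (hk : k ∈ setOfLengths a) (hk₀ : k ≠ 0) : ¬ IsUnit a := by
  obtain ⟨n, rfl⟩ := Nat.exists_eq_succ_of_ne_zero hk₀
  obtain ⟨u, b, hu, -, rfl⟩ := add_one_mem_setOfLengths_iff.1 hk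
  exact fun h => hu.not_isUnit (isUnit_of_mul_isUnit_left h)

lemma length_ne_zero_of_not_isUnit (hk : k ∈ setOfLengths a) (ha : ¬ IsUnit a) : k ≠ 0 := by
  rintro rfl
  exact ha (zero_mem_setOfLengths_iff.1 hk ▸ isUnit_one)

lemma two_le_of_mem_setOfLengths (hk : k ∈ setOfLengths a) (ha : ¬ IsUnit a)
    (ha' : ¬ Irreducible a) : 2 ≤ k := by
  have hk₀ := length_ne_zero_of_not_isUnit hk ha
  have hk₁ : k ≠ 1 := by
    rintro rfl
    exact ha' (one_mem_setOfLengths_iff.1 hk)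
  omega

lemma setOfLengths_eq_singleton_one_of_irreducible (ha : Irreducible a) :
    setOfLengths a = {1} := by
  refine (Set.eq_singleton_iff_unique_mem).2 ⟨one_mem_setOfLengths_iff.2 ha, fun k hk => ?_⟩
  obtain ⟨n, rfl⟩ := Nat.exists_eq_succ_of_ne_zero (length_ne_zero_of_not_isUnit hk ha.not_isUnit)
  obtain ⟨u, b, hu, hn, hub⟩ := add_one_mem_setOfLengths_iff.1 hk
  have hb : IsUnit b := (ha.isUnit_or_isUnit hub.symm).resolve_left hu.not_isUnit
  have hn₀ : n = 0 := by_contra fun h => not_isUnit_of_mem_setOfLengths hn h hb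
  rw [hn₀]

/-- Units have to be excluded: `0 ∈ L(1)`, but `L(u) = ∅` for every other unit `u`. -/
lemma setOfLengths_subset_of_associated (h : Associated a b) (ha : ¬ IsUnit a) :
    setOfLengths a ⊆ setOfLengths b := by
  intro k hk
  obtain ⟨n, rfl⟩ := Nat.exists_eq_succ_of_ne_zero (length_ne_zero_of_not_isUnit hk ha)
  obtain ⟨u, c, hu, hn, rfl⟩ := add_one_mem_setOfLengths_iff.1 hk
  obtain ⟨w, rfl⟩ := h
  exact add_one_mem_setOfLengths_iff.2
    ⟨u * w, c, (irreducible_mul_units w).2 hu, hn, mul_right_comm u w c⟩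

end CommMonoid

section CommMonoidWithZero

variable {M : Type*} [CommMonoidWithZero M] {a p : M} {k : ℕ}

lemma setOfLengths_prime_mul [IsCancelMulZero M] (hp : Prime p) (ha : ¬ IsUnit a) :
    setOfLengths (p * a) = (· + 1) '' setOfLengths a := by
  ext k
  constructor
  · rintro ⟨s, hs, rfl, hprod⟩
    obtain ⟨v, hv, hpv⟩ := hp.exists_mem_multiset_dvd (hprod ▸ dvd_mul_right p a)
    obtain ⟨t, rfl⟩ := Multiset.exists_cons_of_mem hv
    obtain ⟨w, rfl⟩ := hp.irreducible.associated_of_dvd (hs v hv) hpv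
    have hta : Associated t.prod a := by
      refine ⟨w, mul_left_cancel₀ hp.ne_zero ?_⟩
      rw [← hprod, Multiset.prod_cons, mul_assoc, mul_comm t.prod]
    have ht : t.card ∈ setOfLengths t.prod := ⟨t, (Multiset.forall_mem_cons.1 hs).2, rfl, rfl⟩
    exact ⟨t.card, setOfLengths_subset_of_associated hta (hta.isUnit_iff.not.2 ha) ht,
      (t.card_cons _).symm⟩
  · rintro ⟨n, hn, rfl⟩
    exact add_one_mem_setOfLengths_iff.2 ⟨p, a, hp.irreducible, hn, rfl⟩

lemma setOfLengths_prime_pow_mul [IsCancelMulZero M] (hp : Prime p) (ha : ¬ IsUnit a) (n : ℕ) :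
    setOfLengths (p ^ n * a) = (· + n) '' setOfLengths a := by
  induction n with
  | zero => simp
  | succ n ih =>
    have hpa : ¬ IsUnit (p ^ n * a) := fun h => ha (isUnit_of_mul_isUnit_right h)
    rw [pow_succ', mul_assoc, setOfLengths_prime_mul hp hpa, ih, Set.image_image]
    simp only [add_assoc]

lemma setOfLengths_nonempty [WfDvdMonoid M] (ha₀ : a ≠ 0) (ha : ¬ IsUnit a) :
    (setOfLengths a).Nonempty := by
  obtain ⟨s, hs, hprod, -⟩ := (WfDvdMonoid.not_isUnit_iff_exists_factors_eq a ha₀).1 ha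
  exact ⟨s.card, s, hs, rfl, hprod⟩

lemma ne_zero_of_mem_setOfLengths [NoZeroDivisors M] [Nontrivial M]
    (hk : k ∈ setOfLengths a) : a ≠ 0 := by
  obtain ⟨s, hs, -, rfl⟩ := hk
  exact Multiset.prod_ne_zero fun h => (hs 0 h).ne_zero rfl

open UniqueFactorizationMonoid in
lemma card_le_card_normalizedFactors_prod [NormalizationMonoid M] [UniqueFactorizationMonoid M]
    {s : Multiset M} (hs₀ : 0 ∉ s) (hs : ∀ x ∈ s, ¬ IsUnit x) :
    s.card ≤ (normalizedFactors s.prod).card := by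
  have hpos : ∀ n ∈ s.map fun x => (normalizedFactors x).card, 1 ≤ n := by
    simp only [Multiset.forall_mem_map_iff, Nat.one_le_iff_ne_zero, ← Nat.pos_iff_ne_zero,
      Multiset.card_pos_iff_exists_mem]
    exact fun x hx => exists_mem_normalizedFactors (ne_of_mem_of_not_mem hx hs₀) (hs x hx)
  calc s.card = (s.map fun x => (normalizedFactors x).card).card • 1 := by simp
    _ ≤ (s.map fun x => (normalizedFactors x).card).sum := Multiset.card_nsmul_le_sum hpos
    _ = (normalizedFactors s.prod).card := by
      rw [normalizedFactors_multiset_prod s hs₀]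
      exact (Multiset.card_bind s normalizedFactors).symm

end CommMonoidWithZero

open UniqueFactorizationMonoid in
lemma setOfLengths_finite {R : Type*} [CommRing R] [IsDedekindDomain R] (a : R) :
    (setOfLengths a).Finite := by
  refine (Set.finite_Iic (normalizedFactors (Ideal.span {a})).card).subset ?_
  rintro k ⟨s, hs, rfl, rfl⟩
  rw [Set.mem_Iic, ← Ideal.multiset_prod_span_singleton]
  have h₀ : (0 : Ideal R) ∉ s.map fun x => Ideal.span {x} := by
    simp only [Multiset.mem_map, not_exists, not_and, Ideal.zero_eq_bot,
      Ideal.span_singleton_eq_bot]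
    exact fun x hx => (hs x hx).ne_zero
  have hunit : ∀ I ∈ s.map fun x => Ideal.span {x}, ¬ IsUnit I := by
    simp only [Multiset.forall_mem_map_iff, Ideal.isUnit_iff, Ideal.span_singleton_eq_top]
    exact fun x hx => (hs x hx).not_isUnit
  simpa only [Multiset.card_map] using card_le_card_normalizedFactors_prod h₀ hunit

end SetOfLengths

section ProdOne

variable {I G : Type*} [CommGroup G]

/-- The finite family `(g i)_{i ∈ S}` is a minimal zero-sum sequence, written multiplicatively:
`S` is minimal among the nonempty sets over which `g` has product `1`. -/
def IsMinimalProdOne (g : I → G) (S : Finset I) : Prop :=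
  Minimal (fun T => T.Nonempty ∧ ∏ i ∈ T, g i = 1) S

namespace IsMinimalProdOne

variable {g : I → G} {S T : Finset I}

lemma nonempty (h : IsMinimalProdOne g S) : S.Nonempty := h.prop.1

lemma prod_eq_one (h : IsMinimalProdOne g S) : ∏ i ∈ S, g i = 1 := h.prop.2

lemma eq_of_subset (h : IsMinimalProdOne g S) (hTS : T ⊆ S) (hT : T.Nonempty)
    (hgT : ∏ i ∈ T, g i = 1) : T = S :=
  h.eq_of_le ⟨hT, hgT⟩ hTS

end IsMinimalProdOne

end ProdOne

section PrimeProducts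

variable {M : Type*} [CommMonoidWithZero M] {I : Type*} {P : I → M}

lemma prod_prime_eq_one_iff (hP : ∀ i, Prime (P i)) {S : Finset I} :
    ∏ i ∈ S, P i = 1 ↔ S = ∅ := by
  refine ⟨fun h => Finset.eq_empty_of_forall_notMem fun i hi => (hP i).not_isUnit ?_, ?_⟩
  · exact isUnit_of_dvd_one (h ▸ Finset.dvd_prod_of_mem P hi)
  · rintro rfl
    exact Finset.prod_empty

lemma exists_eq_prod_fiber_of_prod_eq_prod_prime [IsCancelMulZero M] [Subsingleton Mˣ]
    (hP : ∀ i, Prime (P i)) {κ : Type*} [Fintype κ] [DecidableEq κ] [Nonempty κ] {S : Finset I}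
    {D : κ → M} (hD : ∏ t, D t = ∏ i ∈ S, P i) :
    ∃ f : I → κ, ∀ t, D t = ∏ i ∈ S with f i = t, P i := by
  classical
  induction S using Finset.induction_on generalizing D with
  | empty =>
    refine ⟨fun _ => Classical.arbitrary κ, fun t => ?_⟩
    rw [Finset.prod_empty] at hD
    have hDt : IsUnit (D t) := isUnit_of_dvd_one (hD ▸ Finset.dvd_prod_of_mem D (Finset.mem_univ t))
    simpa using isUnit_iff_eq_one.1 hDt
  | insert i₀ S hi₀ ih =>
    rw [Finset.prod_insert hi₀] at hD
    obtain ⟨t₀, -, E, hE⟩ := (hP i₀).exists_mem_finset_dvd (hD ▸ dvd_mul_right (P i₀) _)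
    have hquot : ∏ t, update D t₀ E t = ∏ i ∈ S, P i := by
      apply mul_left_cancel₀ (hP i₀).ne_zero
      rw [← hD, Finset.prod_update_of_mem (Finset.mem_univ t₀), ← mul_assoc, ← hE,
        ← Finset.erase_eq, Finset.mul_prod_erase _ _ (Finset.mem_univ t₀)]
    obtain ⟨f, hf⟩ := ih hquot
    have hfiber (t : κ) : ∏ i ∈ S with update f i₀ t₀ i = t, P i = update D t₀ E t := by
      rw [hf]
      refine Finset.prod_congr (Finset.filter_congr fun i hi => ?_) fun _ _ => rfl
      rw [update_of_ne (ne_of_mem_of_not_mem hi hi₀)]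
    refine ⟨update f i₀ t₀, fun t => ?_⟩
    rw [Finset.filter_insert, update_self]
    split_ifs with ht
    · rw [Finset.prod_insert (by simp [hi₀]), hfiber, ← ht, update_self, hE]
    · rw [hfiber, update_of_ne (Ne.symm ht)]

lemma isUnit_iff_eq_empty_of_span_eq_prod {R : Type*} [CommRing R] {P : I → Ideal R}
    (hP : ∀ i, Prime (P i)) {S : Finset I} {u : R}
    (hu : Ideal.span {u} = ∏ i ∈ S, P i) : IsUnit u ↔ S = ∅ := by
  rw [← prod_prime_eq_one_iff hP, ← hu, Ideal.one_eq_top, Ideal.span_singleton_eq_top]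

end PrimeProducts

section DedekindDomain

variable {R : Type*} [CommRing R] [IsDedekindDomain R]

lemma prime_coe_of_isPrime {P : (Ideal R)⁰} (hP : (P : Ideal R).IsPrime) :
    Prime (P : Ideal R) :=
  Ideal.prime_of_isPrime (nonZeroDivisors.coe_ne_zero P) hP

lemma exists_prime_of_mk0_eq_one {P : (Ideal R)⁰} [(P : Ideal R).IsPrime]
    (h : ClassGroup.mk0 P = 1) : ∃ p : R, Prime p :=
  have := (ClassGroup.mk0_eq_one_iff P.2).1 h
  ⟨_, Submodule.IsPrincipal.prime_generator_of_isPrime (P : Ideal R)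
    (nonZeroDivisors.coe_ne_zero P)⟩

variable {I : Type*} {P : I → (Ideal R)⁰} {S : Finset I} {u : R}

lemma prod_mk0_eq_one_iff :
    ∏ i ∈ S, ClassGroup.mk0 (P i) = 1 ↔ ∃ u : R, Ideal.span {u} = ∏ i ∈ S, (P i : Ideal R) := by
  rw [← map_prod, ClassGroup.mk0_eq_one_iff, Submodule.isPrincipal_iff, Submonoid.coe_finsetProd]
  simp only [Ideal.submodule_span_eq, eq_comm]

lemma isMinimalProdOne_of_irreducible (hP : ∀ i, Prime (P i : Ideal R))
    (hu : Ideal.span {u} = ∏ i ∈ S, (P i : Ideal R)) (hirr : Irreducible u) :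
    IsMinimalProdOne (fun i => ClassGroup.mk0 (P i)) S := by
  classical
  have hS := prod_mk0_eq_one_iff.2 ⟨u, hu⟩
  have hS₀ : S.Nonempty := Finset.nonempty_iff_ne_empty.2 fun h =>
    hirr.not_isUnit ((isUnit_iff_eq_empty_of_span_eq_prod hP hu).2 h)
  refine ⟨⟨hS₀, hS⟩, fun T ⟨hT₀, hT⟩ hTS => ?_⟩
  have hST : ∏ i ∈ S \ T, ClassGroup.mk0 (P i) = 1 := by
    rwa [← Finset.prod_sdiff hTS, hT, mul_one] at hS
  obtain ⟨x, hx⟩ := prod_mk0_eq_one_iff.1 hT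
  obtain ⟨y, hy⟩ := prod_mk0_eq_one_iff.1 hST
  have hxy : Associated (y * x) u := by
    rw [← Ideal.span_singleton_eq_span_singleton, ← Ideal.span_singleton_mul_span_singleton, hx, hy,
      hu, Finset.prod_sdiff hTS]
  have hx' : ¬ IsUnit x := fun h =>
    hT₀.ne_empty ((isUnit_iff_eq_empty_of_span_eq_prod hP hx).1 h)
  have hy' : IsUnit y := ((hxy.irreducible_iff.2 hirr).isUnit_or_isUnit rfl).resolve_right hx'
  exact Finset.sdiff_eq_empty_iff_subset.1 ((isUnit_iff_eq_empty_of_span_eq_prod hP hy).1 hy')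

lemma irreducible_of_isMinimalProdOne (hP : ∀ i, Prime (P i : Ideal R))
    (hu : Ideal.span {u} = ∏ i ∈ S, (P i : Ideal R))
    (hS : IsMinimalProdOne (fun i => ClassGroup.mk0 (P i)) S) : Irreducible u := by
  classical
  refine ⟨fun h => hS.nonempty.ne_empty ((isUnit_iff_eq_empty_of_span_eq_prod hP hu).1 h), ?_⟩
  rintro x y rfl
  rw [← Ideal.span_singleton_mul_span_singleton, ← one_mul (∏ i ∈ S, _)] at hu
  obtain ⟨T, U, b, c, hTU, hdisj, hbc, hx, hy⟩ := mul_eq_mul_prime_prod (fun i _ => hP i) hu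
  obtain ⟨rfl, rfl⟩ := mul_eq_one.1 hbc.symm
  rw [one_mul] at hx hy
  rw [isUnit_iff_eq_empty_of_span_eq_prod hP hx, isUnit_iff_eq_empty_of_span_eq_prod hP hy,
    or_iff_not_imp_left, ← ne_eq, ← Finset.nonempty_iff_ne_empty]
  intro hT
  have hTS : T = S := hS.eq_of_subset (hTU ▸ Finset.subset_union_left) hT
    (prod_mk0_eq_one_iff.2 ⟨x, hx⟩)
  exact Finset.disjoint_self_iff_empty U |>.1
    (hdisj.mono_left (hTS ▸ hTU ▸ Finset.subset_union_right))

lemma irreducible_iff_isMinimalProdOne (hP : ∀ i, Prime (P i : Ideal R))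
    (hu : Ideal.span {u} = ∏ i ∈ S, (P i : Ideal R)) :
    Irreducible u ↔ IsMinimalProdOne (fun i => ClassGroup.mk0 (P i)) S :=
  ⟨isMinimalProdOne_of_irreducible hP hu, irreducible_of_isMinimalProdOne hP hu⟩

lemma mem_setOfLengths_iff_exists_coloring [Fintype I] [Nonempty I]
    (hP : ∀ i, Prime (P i : Ideal R)) {a : R} (ha : Ideal.span {a} = ∏ i, (P i : Ideal R))
    {k : ℕ} :
    k ∈ setOfLengths a ↔
      ∃ f : I → Fin k, ∀ t, IsMinimalProdOne (fun i => ClassGroup.mk0 (P i)) {i | f i = t} := by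
  have ha' : ¬ IsUnit a :=
    (isUnit_iff_eq_empty_of_span_eq_prod hP ha).not.2 Finset.univ_nonempty.ne_empty
  constructor
  · intro hk
    have : NeZero k := ⟨length_ne_zero_of_not_isUnit hk ha'⟩
    obtain ⟨u, hu, rfl⟩ := mem_setOfLengths_iff_exists_fin.1 hk
    rw [← Ideal.prod_span_singleton] at ha
    obtain ⟨f, hf⟩ := exists_eq_prod_fiber_of_prod_eq_prod_prime hP ha
    exact ⟨f, fun t => (irreducible_iff_isMinimalProdOne hP (hf t)).1 (hu t)⟩
  · rintro ⟨f, hf⟩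
    choose u hu using fun t => prod_mk0_eq_one_iff.1 (hf t).prod_eq_one
    have huk : k ∈ setOfLengths (∏ t, u t) := mem_setOfLengths_iff_exists_fin.2
      ⟨u, fun t => (irreducible_iff_isMinimalProdOne hP (hu t)).2 (hf t), rfl⟩
    have hua : Associated (∏ t, u t) a := by
      rw [← Ideal.span_singleton_eq_span_singleton, ha, ← Ideal.prod_span_singleton]
      simp only [hu]
      exact Finset.prod_fiberwise Finset.univ f fun i => (P i : Ideal R)
    exact setOfLengths_subset_of_associated hua (hua.isUnit_iff.not.2 ha') huk

end DedekindDomain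

section Grid

variable {J : Type*} [DecidableEq J] {α : J → Type*}

lemma update_induction [Finite J] {Q : (∀ j, α j) → Prop} {D : Set J} {x y : ∀ j, α j}
    (hxy : ∀ j ∈ D, x j = y j) (hstep : ∀ z, Q z → ∀ j ∉ D, ∀ c, Q (update z j c)) (hx : Q x) :
    Q y := by
  have := Fintype.ofFinite J
  have key (s : Finset J) : Q (s.piecewise y x) := by
    induction s using Finset.induction_on with
    | empty => simpa using hx
    | insert j s hj ih =>
      rw [Finset.piecewise_insert]
      by_cases hjD : j ∈ D
      · rwa [← hxy j hjD, ← s.piecewise_eq_of_notMem y x hj, update_eq_self]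
      · exact hstep _ ih j hjD _
  simpa using key Finset.univ

/-- A set of grid points is rectangle-even if it contains an even number of the four vertices of
every axis-parallel rectangle; the parity is expressed by nested equivalences. -/
def IsRectEven (S : Set (∀ j, α j)) : Prop :=
  ∀ (x : ∀ j, α j) ⦃j j' : J⦄, j ≠ j' → ∀ (c : α j) (c' : α j'),
    (x ∈ S ↔ update (update x j c) j' c' ∈ S) ↔ (update x j c ∈ S ↔ update x j' c' ∈ S)

section EvenColoring

variable {κ : Type*} {f : (∀ j, α j) → κ} (hf : ∀ v, IsRectEven (f ⁻¹' {v}))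
include hf

/-- Four vertices whose color classes are all even are colored in pairs, so an edge with
two different end colors forces the colors on the opposite edge. -/
lemma sym2_eq_of_opposite {x : ∀ j, α j} {j i : J} (hij : i ≠ j) {c : α j} (d : α i)
    (hne : f x ≠ f (update x j c)) :
    s(f (update x i d), f (update (update x i d) j c)) = s(f x, f (update x j c)) := by
  have h₁ := hf (f x) x hij d c
  have h₂ := hf (f (update x j c)) x hij d c
  simp only [Set.mem_preimage, Set.mem_singleton_iff] at h₁ h₂
  rw [Sym2.eq_iff]
  grind

variable [Finite J]

lemma sym2_eq_of_parallel {x y : ∀ j, α j} {j : J} {c : α j} (hne : f x ≠ f (update x j c))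
    (hxy : x j = y j) : s(f y, f (update y j c)) = s(f x, f (update x j c)) := by
  refine update_induction (D := {j})
    (Q := fun y => s(f y, f (update y j c)) = s(f x, f (update x j c)))
    (by simpa using hxy) (fun z hz i hi d => ?_) rfl
  have hz' : f z ≠ f (update z j c) := by
    rwa [ne_eq, ← Sym2.mk_isDiag_iff, hz, Sym2.mk_isDiag_iff]
  rw [sym2_eq_of_opposite hf hi d hz', hz]

lemma sym2_eq_of_ne {x y : ∀ j, α j} {j i : J} (hij : i ≠ j) {c : α j} {d : α i}
    (hx : f x ≠ f (update x j c)) (hy : f y ≠ f (update y i d)) :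
    s(f y, f (update y i d)) = s(f x, f (update x j c)) := by
  have h₁ := sym2_eq_of_parallel hf (y := update y j (x j)) hx (by simp)
  have h₂ := sym2_eq_of_parallel hf (y := update (update y j (x j)) i d) hx (by simp [hij.symm])
  have h₃ := sym2_eq_of_parallel hf (y := update y j (x j)) hy (by simp [hij])
  rw [Sym2.eq_iff] at h₁ h₂ h₃ ⊢
  grind

theorem dependsOn_singleton_or_forall_mem_sym2 [Nonempty J] :
    (∃ j, DependsOn f {j}) ∨ ∃ e : Sym2 κ, ∀ z, f z ∈ e := by
  by_cases h : ∃ j, ∀ i ≠ j, ∀ x (d : α i), f x = f (update x i d)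
  · obtain ⟨j, hj⟩ := h
    exact .inl ⟨j, fun x y hxy => update_induction (Q := fun y => f x = f y) hxy
      (fun z hz i hi d => hz.trans (hj i hi z d)) rfl⟩
  right
  push Not at h
  obtain ⟨j, -, x, c, hx⟩ := h (Classical.arbitrary J)
  obtain ⟨i, hij, y, d, hy⟩ := h j
  have hedge (z) (l : J) (e : α l) (hz : f z ≠ f (update z l e)) :
      s(f z, f (update z l e)) = s(f x, f (update x j c)) := by
    by_cases hl : l = j
    · subst hl
      rw [sym2_eq_of_ne hf hij.symm hy hz, sym2_eq_of_ne hf hij hx hy]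
    · exact sym2_eq_of_ne hf hl hx hz
  refine ⟨s(f x, f (update x j c)), fun z => ?_⟩
  refine update_induction (D := ∅) (Q := fun z => f z ∈ s(f x, f (update x j c))) (x := x)
    (by simp) (fun z hz l _ e => ?_) (Sym2.mem_mk_left _ _)
  by_cases hze : f z = f (update z l e)
  · rwa [← hze]
  · exact hedge z l e hze ▸ Sym2.mem_mk_right _ _

end EvenColoring

section Slice

variable [Fintype J] [∀ j, Fintype (α j)] [∀ j, DecidableEq (α j)]

/-- The set of grid points with `j`-th coordinate `c`. -/
def slice (j : J) (c : α j) : Finset (∀ j, α j) := {x | x j = c}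

@[simp]
lemma mem_slice {j : J} {c : α j} {x : ∀ j, α j} : x ∈ slice j c ↔ x j = c := by
  simp [slice]

lemma slice_nonempty [∀ j, Nonempty (α j)] (j : J) (c : α j) : (slice j c).Nonempty :=
  ⟨update (Classical.arbitrary _) j c, by simp⟩

lemma slice_inj [∀ j, Nonempty (α j)] {j : J} {c c' : α j} : slice j c = slice j c' ↔ c = c' := by
  refine ⟨fun h => ?_, congrArg _⟩
  obtain ⟨x, hx⟩ := slice_nonempty j c
  exact (mem_slice.1 hx).symm.trans (mem_slice.1 (h ▸ hx))

/-- The rectangle spanned by two points of the slice `x j = c` and a coordinate `c' ≠ c` has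
its other two vertices outside the slice. -/
lemma eq_slice_of_isRectEven {j : J} [Nontrivial (α j)] {c : α j} {T : Finset (∀ j, α j)}
    (hT : IsRectEven (T : Set (∀ j, α j))) (hTj : T ⊆ slice j c) (hne : T.Nonempty) :
    T = slice j c := by
  obtain ⟨x, hx⟩ := hne
  obtain ⟨c', hc'⟩ := exists_ne c
  have hout {z : ∀ j, α j} (hz : z j = c') : z ∉ T := fun h =>
    hc' (hz.symm.trans (mem_slice.1 (hTj h)))
  refine hTj.antisymm fun y hy => ?_
  refine update_induction (D := {j}) (Q := (· ∈ T)) ?_ (fun z hz i hi d => ?_) hx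
  · simp only [Set.mem_singleton_iff, forall_eq, mem_slice.1 hy, mem_slice.1 (hTj hx)]
  · have h := hT z (Ne.symm hi) c' d
    simp only [Finset.mem_coe] at h
    have h₁ : update z j c' ∉ T := hout (update_self j c' z)
    have h₂ : update (update z j c') i d ∉ T :=
      hout (by rw [update_of_ne (Ne.symm hi), update_self])
    tauto

end Slice

section Labeling

variable {G : Type*} [CommGroup G]

/-- The homomorphism sending a labeling `g : I → G` to the product of its labels over `S`. -/
def prodHom {I : Type*} (S : Finset I) : (I → G) →* G := ∏ i ∈ S, Pi.evalMonoidHom (fun _ => G) i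

@[simp]
lemma prodHom_apply {I : Type*} (S : Finset I) (g : I → G) : prodHom S g = ∏ i ∈ S, g i := by
  simp [prodHom, MonoidHom.finsetProd_apply]

/-- This is B. H. Neumann's covering lemma, applied to the kernels of the `φ i`. -/
lemma exists_mem_forall_apply_ne_one {A B ι : Type*} [Group A] [Group B] {H : Subgroup A}
    {s : Finset ι} {φ : ι → A →* B} (hφ : ∀ i ∈ s, (φ i '' H).Infinite) :
    ∃ a ∈ H, ∀ i ∈ s, φ i a ≠ 1 := by
  by_contra! hcover
  obtain ⟨i, hi, hfin⟩ := Subgroup.exists_finiteIndex_of_leftCoset_cover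
    (s := s) (H := fun i => ((φ i).comp H.subtype).ker) (g := fun _ => 1) <| by
      refine Set.eq_univ_of_forall fun a => ?_
      obtain ⟨i, hi, hia⟩ := hcover a a.2
      simpa using ⟨i, hi, hia⟩
  have hrange : Finite ((φ i).comp H.subtype).range :=
    Nat.finite_of_card_ne_zero (Subgroup.index_ker ((φ i).comp H.subtype) ▸ hfin.index_ne_zero)
  refine hφ i hi (Set.Finite.subset hrange ?_)
  rintro _ ⟨a, ha, rfl⟩
  exact ⟨⟨a, ha⟩, rfl⟩

variable [Fintype J] [∀ j, DecidableEq (α j)]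

/-- The labeling with labels `t`, `t⁻¹`, `t`, `t⁻¹` around the rectangle that is spanned by `x`
and the coordinates `c` and `c'` in the directions `j` and `j'`, and `1` elsewhere. -/
def rectLabeling (x : ∀ j, α j) (j j' : J) (c : α j) (c' : α j') (t : G) : (∀ j, α j) → G :=
  Pi.mulSingle x t * Pi.mulSingle (update (update x j c) j' c') t *
    (Pi.mulSingle (update x j c) t)⁻¹ * (Pi.mulSingle (update x j' c') t)⁻¹

lemma prod_rectLabeling (x : ∀ j, α j) (j j' : J) (c : α j) (c' : α j') (t : G)
    (S : Finset (∀ j, α j)) :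
    ∏ i ∈ S, rectLabeling x j j' c c' t i =
      (if x ∈ S then t else 1) * (if update (update x j c) j' c' ∈ S then t else 1) *
        (if update x j c ∈ S then t else 1)⁻¹ * (if update x j' c' ∈ S then t else 1)⁻¹ := by
  simp only [rectLabeling, Pi.mul_apply, Pi.inv_apply, Finset.prod_mul_distrib,
    Finset.prod_inv_distrib, Finset.prod_pi_mulSingle']

lemma injective_prod_rectLabeling {x : ∀ j, α j} {j j' : J} {c : α j} {c' : α j'}
    {S : Finset (∀ j, α j)}
    (hodd : ¬ ((x ∈ S ↔ update (update x j c) j' c' ∈ S) ↔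
      (update x j c ∈ S ↔ update x j' c' ∈ S))) :
    Injective fun t : G => ∏ i ∈ S, rectLabeling x j j' c c' t i := by
  have h : (∀ t : G, ∏ i ∈ S, rectLabeling x j j' c c' t i = t) ∨
      ∀ t : G, ∏ i ∈ S, rectLabeling x j j' c c' t i = t⁻¹ := by
    simp only [prod_rectLabeling]
    by_cases h₁ : x ∈ S <;> by_cases h₂ : update (update x j c) j' c' ∈ S <;>
      by_cases h₃ : update x j c ∈ S <;> by_cases h₄ : update x j' c' ∈ S <;> simp_all
  rcases h with h | h
  · simp only [h]
    exact injective_id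
  · simpa only [h] using inv_injective

variable [∀ j, Fintype (α j)]

variable (α G) in
/-- The subgroup of those `G`-labelings of the grid whose product over every slice is `1`. -/
def balancedLabelings : Subgroup ((∀ j, α j) → G) := ⨅ j, ⨅ c : α j, (prodHom (slice j c)).ker

lemma mem_balancedLabelings {g : (∀ j, α j) → G} :
    g ∈ balancedLabelings α G ↔ ∀ j (c : α j), ∏ i ∈ slice j c, g i = 1 := by
  simp [balancedLabelings, Subgroup.mem_iInf]

lemma rectLabeling_mem_balancedLabelings (x : ∀ j, α j) {j j' : J} (hj : j ≠ j') (c : α j)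
    (c' : α j') (t : G) : rectLabeling x j j' c c' t ∈ balancedLabelings α G := by
  rw [mem_balancedLabelings]
  intro i d
  simp only [prod_rectLabeling, mem_slice]
  rcases eq_or_ne i j with rfl | hij
  · simp only [update_self, update_of_ne hj]
    split_ifs <;> simp
  rcases eq_or_ne i j' with rfl | hij'
  · simp only [update_self, update_of_ne hij]
    split_ifs <;> simp
  · simp only [update_of_ne hij, update_of_ne hij']
    split_ifs <;> simp

/-- A labeling of the grid is generic if its product over every slice is `1`, but otherwise only
rectangle-even sets may have product `1`. -/
structure IsGenericLabeling (g : (∀ j, α j) → G) : Prop where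
  prod_slice : ∀ j (c : α j), ∏ i ∈ slice j c, g i = 1
  isRectEven : ∀ S : Finset (∀ j, α j), ∏ i ∈ S, g i = 1 → IsRectEven (S : Set (∀ j, α j))

variable (α G) in
theorem exists_isGenericLabeling [Infinite G] :
    ∃ g : (∀ j, α j) → G, IsGenericLabeling g := by
  classical
  have hinf : ∀ S ∈ ({S | ¬ IsRectEven (S : Set (∀ j, α j))} : Finset (Finset (∀ j, α j))),
      (prodHom (G := G) S '' balancedLabelings α G).Infinite := by
    intro S hS
    simp only [IsRectEven, Finset.mem_filter_univ, Finset.mem_coe, not_forall] at hS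
    obtain ⟨x, j, j', hj, c, c', hodd⟩ := hS
    refine Set.infinite_of_injective_forall_mem (injective_prod_rectLabeling (G := G) hodd)
      fun t => ⟨_, rectLabeling_mem_balancedLabelings x hj c c' t, prodHom_apply S _⟩
  obtain ⟨g, hg, hne⟩ := exists_mem_forall_apply_ne_one hinf
  refine ⟨g, mem_balancedLabelings.1 hg, fun S hS => ?_⟩
  by_contra hodd
  exact hne S (by simpa using hodd) (by simpa using hS)

namespace IsGenericLabeling

variable {g : (∀ j, α j) → G} (hg : IsGenericLabeling g)
include hg

lemma prod_univ (j : J) : ∏ i, g i = 1 := by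
  rw [← Finset.prod_fiberwise Finset.univ (fun i : ∀ j, α j => i j) g]
  exact Finset.prod_eq_one fun c _ => hg.prod_slice j c

variable [∀ j, Nontrivial (α j)]

lemma isMinimalProdOne_slice (j : J) (c : α j) : IsMinimalProdOne g (slice j c) := by
  refine ⟨⟨slice_nonempty j c, hg.prod_slice j c⟩, fun T ⟨hne, hT⟩ hTj => ?_⟩
  exact (eq_slice_of_isRectEven (hg.isRectEven T hT) hTj hne).ge

lemma card_eq_of_dependsOn {k : ℕ} {f : (∀ j, α j) → Fin k}
    (hf : ∀ t, IsMinimalProdOne g {x | f x = t}) {j : J} (hfj : DependsOn f {j}) :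
    Fintype.card (α j) = k := by
  have hsub (x : ∀ j, α j) : slice j (x j) ⊆ ({y | f y = f x} : Finset (∀ j, α j)) := by
    intro y hy
    simpa using hfj (by simpa using hy)
  have hfiber (x : ∀ j, α j) : slice j (x j) = ({y | f y = f x} : Finset (∀ j, α j)) :=
    (hf (f x)).eq_of_subset (hsub x) (slice_nonempty j _) (hg.prod_slice j _)
  have x₀ : ∀ j, α j := Classical.arbitrary _
  have hbij : Bijective fun c : α j => f (update x₀ j c) := by
    refine ⟨fun c c' hcc' => ?_, fun t => ?_⟩
    · have h := hfiber (update x₀ j c)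
      rw [show f (update x₀ j c) = f (update x₀ j c') from hcc', ← hfiber] at h
      simpa using slice_inj.1 h
    · obtain ⟨x, hx⟩ := (hf t).nonempty
      refine ⟨x j, .trans (hfj ?_) (by simpa using hx)⟩
      simp
  simpa using Fintype.card_of_bijective hbij

lemma eq_two_of_forall_mem_sym2 [Nonempty J] {k : ℕ} {f : (∀ j, α j) → Fin k}
    (hf : ∀ t, IsMinimalProdOne g {x | f x = t}) {e : Sym2 (Fin k)} (he : ∀ x, f x ∈ e) :
    k = 2 := by
  have hk₂ : k ≤ 2 := by
    have huniv : e.toFinset = Finset.univ := by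
      refine Finset.eq_univ_of_forall fun t => ?_
      obtain ⟨x, hx⟩ := (hf t).nonempty
      rw [Finset.mem_filter_univ] at hx
      exact Sym2.mem_toFinset.2 (hx ▸ he x)
    calc k = e.toFinset.card := by rw [huniv, Finset.card_fin]
      _ ≤ 2 := by rw [Sym2.card_toFinset]; split_ifs <;> omega
  have hk₀ : k ≠ 0 := by
    rintro rfl
    exact (f (Classical.arbitrary _)).elim0
  have hk₁ : k ≠ 1 := by
    rintro rfl
    have j : J := Classical.arbitrary J
    obtain ⟨c, c', hcc'⟩ := exists_pair_ne (α j)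
    have huniv : slice j c = slice j c' := by
      have h (d : α j) : slice j d = ({x | f x = 0} : Finset (∀ j, α j)) :=
        (hf 0).eq_of_subset (fun x _ => by simp [Subsingleton.elim (f x) 0]) (slice_nonempty j d)
          (hg.prod_slice j d)
      rw [h, h]
    exact hcc' (slice_inj.1 huniv)
  omega

lemma exists_coloring_iff_exists_card_eq {j₀ : J} (hj₀ : Fintype.card (α j₀) = 2) {k : ℕ} :
    (∃ f : (∀ j, α j) → Fin k, ∀ t, IsMinimalProdOne g {x | f x = t}) ↔
      ∃ j, Fintype.card (α j) = k := by
  constructor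
  · rintro ⟨f, hf⟩
    have : Nonempty J := ⟨j₀⟩
    have heven (t : Fin k) : IsRectEven (f ⁻¹' {t}) := by
      simpa [Set.preimage] using hg.isRectEven _ (hf t).prod_eq_one
    rcases dependsOn_singleton_or_forall_mem_sym2 heven with ⟨j, hj⟩ | ⟨e, he⟩
    · exact ⟨j, hg.card_eq_of_dependsOn hf hj⟩
    · exact ⟨j₀, hj₀.trans (hg.eq_two_of_forall_mem_sym2 hf he).symm⟩
  · rintro ⟨j, rfl⟩
    refine ⟨fun x => Fintype.equivFin (α j) (x j), fun t => ?_⟩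
    convert hg.isMinimalProdOne_slice j ((Fintype.equivFin (α j)).symm t) using 1
    ext x
    simp [Equiv.eq_symm_apply]

end IsGenericLabeling

end Labeling

end Grid

section Realization

variable {R : Type*} [CommRing R] [IsDedekindDomain R] [Infinite (ClassGroup R)]
  (hprimes : ∀ g : ClassGroup R, ∃ P : (Ideal R)⁰, (P : Ideal R).IsPrime ∧ ClassGroup.mk0 P = g)
include hprimes

lemma exists_setOfLengths_eq_of_two_mem {L : Set ℕ} (hfin : L.Finite) (hL : ∀ k ∈ L, 2 ≤ k)
    (h₂ : 2 ∈ L) : ∃ a : R, setOfLengths a = L := by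
  classical
  have : Fintype L := hfin.fintype
  have (l : L) : Nontrivial (Fin l) := Fin.nontrivial_iff_two_le.2 (hL l l.2)
  obtain ⟨g, hg⟩ := exists_isGenericLabeling (fun l : L => Fin l) (ClassGroup R)
  choose P hP hPg using fun i => hprimes (g i)
  obtain rfl : (fun i => ClassGroup.mk0 (P i)) = g := funext hPg
  obtain ⟨a, ha⟩ := prod_mk0_eq_one_iff.1 (hg.prod_univ ⟨2, h₂⟩)
  refine ⟨a, Set.ext fun k => ?_⟩
  rw [mem_setOfLengths_iff_exists_coloring (fun i => prime_coe_of_isPrime (hP i)) ha,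
    hg.exists_coloring_iff_exists_card_eq (j₀ := ⟨2, h₂⟩) (Fintype.card_fin 2)]
  simp

theorem exists_setOfLengths_eq {L : Set ℕ} (hfin : L.Finite) (hne : L.Nonempty)
    (hL : ∀ k ∈ L, 2 ≤ k) : ∃ a : R, setOfLengths a = L := by
  obtain ⟨m, hm⟩ : ∃ m, IsLeast L (m + 2) := by
    refine ⟨sInf L - 2, ?_⟩
    rw [Nat.sub_add_cancel (hL _ (Nat.sInf_mem hne))]
    exact ⟨Nat.sInf_mem hne, fun k hk => Nat.sInf_le hk⟩
  have hshift : (· + m) '' ((· + m) ⁻¹' L) = L := by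
    refine Set.image_preimage_eq_of_subset fun k hk => ⟨k - m, ?_⟩
    have := hm.2 hk
    grind
  obtain ⟨b, hb⟩ := exists_setOfLengths_eq_of_two_mem hprimes (L := (· + m) ⁻¹' L)
    (hfin.preimage (add_left_injective m).injOn)
    (fun k hk => by have : m + 2 ≤ k + m := hm.2 hk; omega) (by simpa [add_comm] using hm.1)
  have hb₂ : 2 ∈ setOfLengths b := by
    rw [hb]
    simpa [add_comm] using hm.1
  obtain ⟨P, hP, hP₁⟩ := hprimes 1
  obtain ⟨p, hp⟩ := exists_prime_of_mk0_eq_one hP₁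
  refine ⟨p ^ m * b, ?_⟩
  rw [setOfLengths_prime_pow_mul hp (not_isUnit_of_mem_setOfLengths hb₂ two_ne_zero), hb, hshift]

open scoped Classical in
theorem system_of_sets_of_lengths_general :
    {L : Set ℕ | ∃ a : R, a ≠ 0 ∧
        L = if IsUnit a then ({0} : Set ℕ) else setOfLengths a} =
      {({0} : Set ℕ), ({1} : Set ℕ)} ∪
        {L : Set ℕ | L.Finite ∧ L.Nonempty ∧ ∀ k ∈ L, 2 ≤ k} := by
  refine Set.Subset.antisymm ?_ ?_
  · rintro L ⟨a, ha₀, rfl⟩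
    by_cases ha : IsUnit a
    · simp [ha]
    by_cases hirr : Irreducible a
    · simp [ha, setOfLengths_eq_singleton_one_of_irreducible hirr]
    · rw [if_neg ha]
      exact .inr ⟨setOfLengths_finite a, setOfLengths_nonempty ha₀ ha,
        fun k hk => two_le_of_mem_setOfLengths hk ha hirr⟩
  · rintro L ((rfl | rfl) | ⟨hfin, hne, hL⟩)
    · exact ⟨1, one_ne_zero, by simp⟩
    · obtain ⟨P, hP, hP₁⟩ := hprimes 1
      obtain ⟨p, hp⟩ := exists_prime_of_mk0_eq_one hP₁
      exact ⟨p, hp.ne_zero, by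
        rw [if_neg hp.not_isUnit, setOfLengths_eq_singleton_one_of_irreducible hp.irreducible]⟩
    · obtain ⟨a, rfl⟩ := exists_setOfLengths_eq hprimes hfin hne hL
      obtain ⟨k, hk⟩ := hne
      exact ⟨a, ne_zero_of_mem_setOfLengths hk, by
        rw [if_neg (not_isUnit_of_mem_setOfLengths hk (by have := hL k hk; omega))]⟩

end Realization

open scoped Classical in
/-- **Corollary 4.4(2), system of sets of lengths.** Let `R` be a Dedekind domain, not a
field, with infinite class group such that every class contains infinitely many nonzero
prime ideals. Then the system of sets of lengths of `R` (with the convention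
`L(a) = {0}` for units `a`) is `{{0}, {1}}` together with all finite nonempty subsets of
`ℕ` whose elements are all at least `2`. -/
theorem system_of_sets_of_lengths {R : Type*} [CommRing R] [IsDedekindDomain R]
    (hR : ¬ IsField R) (hinf : Infinite (ClassGroup R))
    (hprimes : ∀ g : ClassGroup R,
      {P : (Ideal R)⁰ | (P : Ideal R).IsPrime ∧ ClassGroup.mk0 P = g}.Infinite) :
    {L : Set ℕ | ∃ a : R, a ≠ 0 ∧
        L = if IsUnit a then ({0} : Set ℕ) else setOfLengths a} =
      {({0} : Set ℕ), ({1} : Set ℕ)} ∪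
        {L : Set ℕ | L.Finite ∧ L.Nonempty ∧ ∀ k ∈ L, 2 ≤ k} :=
  system_of_sets_of_lengths_general fun g => (hprimes g).nonempty
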